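/- Let n ≥ 1, let σ² > 0 be a real number, let P ∈ ℝ^{n×n} be a symmetric positive semidefinite matrix, and set S = P(P + σ²I)⁻¹. For every integer ν ≥ 1, the matrix I − S is invertible and the boosting kernel P_ν := σ²(I − S)^{−ν} − σ²I satisfies P_ν(P_ν + σ²I)⁻¹ = I − (I − S)^ν. -/

import Mathlib

open Matrix

/-!
For any matrix `Q` with `Q + σ²I` invertible, the smoother `S_Q = Q(Q + σ²I)⁻¹` satisfies
`I − S_Q = σ²(Q + σ²I)⁻¹`. The boosting kernel is chosen so that `P_ν + σ²I = σ²(I − S)^{−ν}`;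
applying the identity to `Q = P_ν` gives `I − S_{P_ν} = (I − S)^ν`.
-/

section Smoother

variable {ι R : Type*} [Fintype ι] [DecidableEq ι] [CommRing R]

/-- The linear smoother `P(P + cI)⁻¹` with kernel matrix `P` and noise variance `c` (the paper's
`σ²`). The inverse is `Matrix.inv`, so this is `0` when `P + cI` is singular. -/
noncomputable def smoother (c : R) (P : Matrix ι ι R) : Matrix ι ι R :=
  P * (P + c • (1 : Matrix ι ι R))⁻¹

/-- The paper's boosting kernel `P_ν = c(I − S)^{−ν} − cI`, as a function of the smoother matrix
`S`; it is the kernel whose smoother performs `ν` boosting iterations with `S`. -/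
noncomputable def boostingKernel (c : R) (S : Matrix ι ι R) (ν : ℕ) : Matrix ι ι R :=
  c • ((1 - S)⁻¹) ^ ν - c • 1

theorem one_sub_smoother {c : R} {P : Matrix ι ι R} (hP : IsUnit (P + c • (1 : Matrix ι ι R))) :
    1 - smoother c P = c • (P + c • (1 : Matrix ι ι R))⁻¹ := by
  rw [smoother, sub_eq_iff_eq_add', ← smul_one_mul c (P + c • (1 : Matrix ι ι R))⁻¹, ← add_mul,
    mul_nonsing_inv _ ((isUnit_iff_isUnit_det _).mp hP)]

theorem isUnit_one_sub_smoother {c : R} (hc : IsUnit c) {P : Matrix ι ι R}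
    (hP : IsUnit (P + c • (1 : Matrix ι ι R))) : IsUnit (1 - smoother c P) := by
  rw [one_sub_smoother hP]
  exact (isUnit_nonsing_inv_iff.mpr hP).smul hc.unit

theorem boostingKernel_add_smul_one (c : R) (S : Matrix ι ι R) (ν : ℕ) :
    boostingKernel c S ν + c • 1 = c • ((1 - S) ^ ν)⁻¹ := by
  rw [boostingKernel, sub_add_cancel, inv_pow']

theorem smoother_boostingKernel {c : R} (hc : IsUnit c) {S : Matrix ι ι R}
    (hS : IsUnit (1 - S)) (ν : ℕ) :
    smoother c (boostingKernel c S ν) = 1 - (1 - S) ^ ν := by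
  obtain ⟨c, rfl⟩ := hc
  have hpow : IsUnit ((1 - S) ^ ν)⁻¹ := isUnit_nonsing_inv_iff.mpr (hS.pow ν)
  have hkernel : IsUnit (boostingKernel (c : R) S ν + (c : R) • 1) := by
    rw [boostingKernel_add_smul_one]
    exact hpow.smul c
  have one_sub_eq : 1 - smoother (c : R) (boostingKernel (c : R) S ν) = (1 - S) ^ ν := calc
    1 - smoother (c : R) (boostingKernel (c : R) S ν)
    _ = c • (c • ((1 - S) ^ ν)⁻¹)⁻¹ := by
      rw [one_sub_smoother hkernel, boostingKernel_add_smul_one, Units.smul_def, Units.smul_def]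
    _ = (1 - S) ^ ν := by
      rw [inv_smul' _ c ((isUnit_iff_isUnit_det _).mp hpow), smul_inv_smul,
        nonsing_inv_nonsing_inv _ ((isUnit_iff_isUnit_det _).mp (hS.pow ν))]
  rw [← one_sub_eq, sub_sub_cancel]

theorem boosting_kernel_smoother_general {c : R} (hc : IsUnit c) {P : Matrix ι ι R}
    (hP : IsUnit (P + c • (1 : Matrix ι ι R))) (ν : ℕ) :
    IsUnit (1 - smoother c P) ∧
      smoother c (boostingKernel c (smoother c P) ν) = 1 - (1 - smoother c P) ^ ν :=
  have hS := isUnit_one_sub_smoother hc hP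
  ⟨hS, smoother_boostingKernel hc hS ν⟩

end Smoother

theorem isUnit_add_smul_one_of_posSemidef {ι K : Type*} [Fintype ι] [DecidableEq ι] [Field K]
    [PartialOrder K] [StarRing K] [StarOrderedRing K] {P : Matrix ι ι K} (hP : P.PosSemidef)
    {c : K} (hc : 0 < c) : IsUnit (P + c • (1 : Matrix ι ι K)) :=
  (PosDef.posSemidef_add hP (PosDef.one.smul hc)).isUnit

/-- Key step of Proposition 1: with `S = P(P + σ²I)⁻¹`, for every `ν ≥ 1`,
`I − S` is invertible and the boosting kernel `Pν = σ²(I − S)^{−ν} − σ²I`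
satisfies `Pν(Pν + σ²I)⁻¹ = I − (I − S)^ν`. -/
theorem boosting_kernel_smoother {n : ℕ} (hn : 1 ≤ n) (σ2 : ℝ) (hσ2 : 0 < σ2)
    (P : Matrix (Fin n) (Fin n) ℝ) (hP : P.PosSemidef)
    (S : Matrix (Fin n) (Fin n) ℝ)
    (hS : S = P * (P + σ2 • (1 : Matrix (Fin n) (Fin n) ℝ))⁻¹) :
    ∀ ν : ℕ, 1 ≤ ν →
      IsUnit (1 - S) ∧
      (σ2 • ((1 - S)⁻¹) ^ ν - σ2 • 1) *
        ((σ2 • ((1 - S)⁻¹) ^ ν - σ2 • 1) + σ2 • 1)⁻¹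
        = 1 - (1 - S) ^ ν := by
  subst hS
  exact fun ν _ => boosting_kernel_smoother_general hσ2.ne'.isUnit
    (isUnit_add_smul_one_of_posSemidef hP hσ2) ν
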